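/- There exist absolute constants s_1 > 0 and s_2 > 0 such that for every fixed integer k ≥ 3 and all sufficiently large n, s_1·2^(k/2)·log₂ n ≤ W(n,k) ≤ s_2·k·2^k·log₂ n. -/

import Mathlib

/-!
Upper bound: a uniformly random orientation orients a given `k`-cycle forwards with probability
`2^(-k)`, so `t` independent ones all miss it with probability at most `(1 - 2^(-k))^t`. There are
at most `n^k` cycles, and a union bound gives a covering family as soon as `t > k 2^k ln n`
(`exists_covering`). The estimate on a single cycle (`card_good`) comes from the fact that the
restriction of an orientation to the `k` edges of the cycle is a homomorphism of elementary abelian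
`2`-groups, so that all its nonempty fibres have the same size.

Lower bound (`lower_card`): fix `m = (k-3)/2` disjoint pairs of vertices, each traversed by the
cycle as an edge, in a direction to be chosen. A given member of the family is compatible with only
two of the `2^m` choices of directions (one for each direction of the cycle), so for some choice at
most `2t / 2^m` members remain. If `2` to the number of remaining members is less than `n - k`, then
two further vertices `y`, `z` stand in the same relation to a fixed vertex `a` in all of them, and
a cycle through `y, a, z` and the chosen pairs is not covered. Hence `2t ≥ 2^m log₂ (n - k)`.
-/

/-- The cyclic successor of an index in `Fin k`. -/
def cyc {k : ℕ} (i : Fin k) : Fin k := ⟨(i.val + 1) % k, Nat.mod_lt _ i.pos⟩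

/-- An orientation of the edges of the complete graph on `Fin n`:
for all distinct `i, j` exactly one of `O i j`, `O j i` holds. -/
def IsTournament {n : ℕ} (O : Fin n → Fin n → Prop) : Prop :=
  ∀ i j : Fin n, i ≠ j → Xor' (O i j) (O j i)

/-- A family of orientations of `K_n` covers all `k`-cycles if for every sequence of `k`
distinct vertices some member orients the corresponding `k`-cycle cyclically,
in one or the other direction. -/
def CycleCovering (n k t : ℕ) (F : Fin t → (Fin n → Fin n → Prop)) : Prop :=
  (∀ s, IsTournament (F s)) ∧
    ∀ v : Fin k → Fin n, Function.Injective v →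
      ∃ s, (∀ i : Fin k, F s (v i) (v (cyc i))) ∨ (∀ i : Fin k, F s (v (cyc i)) (v i))

/-- `W(n,k)`: the minimum number of orientations of `K_n` such that every `k`-cycle is
cyclically oriented (in one or the other direction) in at least one of them. -/
noncomputable def Wnk (n k : ℕ) : ℕ :=
  sInf {t : ℕ | ∃ F : Fin t → (Fin n → Fin n → Prop), CycleCovering n k t F}

/-! ### Upper bound -/

/-- The orientation of `K_n` encoded by the bits `b (i, j)`, `i < j`; the other bits are ignored. -/
def orient {n : ℕ} (b : Fin n × Fin n → Bool) (i j : Fin n) : Prop :=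
  (i < j ∧ b (i, j) = true) ∨ (j < i ∧ b (j, i) = false)

lemma orient_isTournament {n : ℕ} (b : Fin n × Fin n → Bool) : IsTournament (orient b) := by
  intro i j hij
  unfold orient Xor'
  rcases lt_or_gt_of_ne hij with h | h
  · have hji := h.not_gt
    cases b (i, j) <;> simp [h, hji]
  · have hji := h.not_gt
    cases b (j, i) <;> simp [h, hji]

/-- The bit position which decides the orientation of the edge `ij`. -/
def edge {n : ℕ} (i j : Fin n) : Fin n × Fin n := if i < j then (i, j) else (j, i)

lemma orient_congr {n : ℕ} {b c : Fin n × Fin n → Bool} {i j : Fin n}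
    (h : b (edge i j) = c (edge i j)) : orient b i j ↔ orient c i j := by
  unfold edge at h
  unfold orient
  split_ifs at h with hij
  · simp [hij, hij.not_gt, h]
  · simp [hij, h]

lemma cyc_ne {k : ℕ} (hk : 3 ≤ k) (i : Fin k) : cyc i ≠ i := by
  intro h
  have h1 := congrArg Fin.val h
  have := i.isLt
  simp only [cyc] at h1
  rcases Nat.lt_or_ge (i.val + 1) k with h2 | h2
  · rw [Nat.mod_eq_of_lt h2] at h1; omega
  · have : i.val + 1 = k := by omega
    rw [this, Nat.mod_self] at h1; omega

lemma cyc_cyc_ne {k : ℕ} (hk : 3 ≤ k) (i : Fin k) : cyc (cyc i) ≠ i := by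
  intro h
  have h1 := congrArg Fin.val h
  have := i.isLt
  simp only [cyc, Nat.mod_add_mod] at h1
  rcases Nat.lt_or_ge (i.val + 1 + 1) k with h2 | h2
  · rw [Nat.mod_eq_of_lt h2] at h1; omega
  · rw [Nat.mod_eq_sub_mod h2, Nat.mod_eq_of_lt (by omega)] at h1; omega

/-- For `k ≥ 3` a cycle never uses an edge in both directions, so some orientation follows it. -/
lemma exists_good {n k : ℕ} (hk : 3 ≤ k) (v : Fin k → Fin n) (hv : Function.Injective v) :
    ∃ b, ∀ i, orient b (v i) (v (cyc i)) := by
  classical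
  refine ⟨fun p => decide (∃ l, v l = p.1 ∧ v (cyc l) = p.2), fun i => ?_⟩
  have hne : v i ≠ v (cyc i) := fun h => cyc_ne hk i (hv h).symm
  rcases lt_or_gt_of_ne hne with h | h
  · left
    exact ⟨h, by simpa using ⟨i, rfl, rfl⟩⟩
  · right
    refine ⟨h, ?_⟩
    simp only [decide_eq_false_iff_not]
    rintro ⟨l, h1, h2⟩
    have h1 := hv h1
    have h2 := hv h2
    subst h1
    exact cyc_cyc_ne hk i h2

open Classical in
/-- At least a fraction `2^(-k)` of all orientations follows a given `k`-cycle. -/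
lemma card_good {n k : ℕ} (hk : 3 ≤ k) (v : Fin k → Fin n) (hv : Function.Injective v) :
    Fintype.card (Fin n × Fin n → Bool) ≤
      2 ^ k * (Finset.univ.filter
        (fun b : Fin n × Fin n → Bool => ∀ i, orient b (v i) (v (cyc i)))).card := by
  obtain ⟨b0, hb0⟩ := exists_good hk v hv
  let φ : (Fin n × Fin n → Bool) → (Fin k → Bool) := fun b i => b (edge (v i) (v (cyc i)))
  have hfib : ∀ x ∈ (Finset.univ : Finset (Fin k → Bool)),
      (Finset.univ.filter (fun b => φ b = x)).card ≤ (Finset.univ.filter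
        (fun b : Fin n × Fin n → Bool => ∀ i, orient b (v i) (v (cyc i)))).card := by
    intro x _
    by_cases hx : ∃ c, φ c = x
    · obtain ⟨c, hc⟩ := hx
      -- translation by `c + b0` moves the fibre of `c` into the fibre of `b0`
      refine Finset.card_le_card_of_injOn (fun b p => (b p).xor ((c p).xor (b0 p))) ?_ ?_
      · intro b hb
        simp only [Finset.coe_filter, Finset.mem_univ, true_and, Set.mem_ofPred_eq] at hb ⊢
        intro i
        refine (orient_congr ?_).2 (hb0 i)
        have : b (edge (v i) (v (cyc i))) = c (edge (v i) (v (cyc i))) :=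
          congrFun (hb.trans hc.symm) i
        simp [this]
      · intro b _ b' _ h
        funext p
        have := congrFun h p
        simpa using this
    · have : Finset.univ.filter (fun b => φ b = x) = ∅ := by
        ext b
        simp only [Finset.mem_filter, Finset.mem_univ, true_and, Finset.notMem_empty, iff_false]
        exact fun h => hx ⟨b, h⟩
      rw [this]
      simp
  have h := Finset.card_eq_sum_card_fiberwise (s := Finset.univ) (t := Finset.univ) (f := φ)
    (fun _ _ => by simp)
  have h2 := Finset.sum_le_card_nsmul _ _ _ hfib
  rw [← h] at h2
  simpa using h2

lemma exists_covering {n k t : ℕ} (hk : 3 ≤ k)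
    (ht : (n : ℝ) ^ k * (1 - 1 / 2 ^ k) ^ t < 1) :
    ∃ F : Fin t → (Fin n → Fin n → Prop), CycleCovering n k t F := by
  classical
  set N := Fintype.card (Fin n × Fin n → Bool) with hN
  have hNpos : 0 < (N : ℝ) := by
    have : 0 < N := Fintype.card_pos
    exact_mod_cast this
  let bad : (Fin k → Fin n) → Finset (Fin n × Fin n → Bool) := fun v =>
    Finset.univ.filter (fun b => ¬ ∀ i, orient b (v i) (v (cyc i)))
  have hbad : ∀ v, Function.Injective v → ((bad v).card : ℝ) ≤ N * (1 - 1 / 2 ^ k) := by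
    intro v hv
    have h1 := card_good hk v hv
    have h2 := Finset.card_filter_add_card_filter_not (s := Finset.univ)
      (fun b : Fin n × Fin n → Bool => ∀ i, orient b (v i) (v (cyc i)))
    rw [Finset.card_univ, ← hN] at h2
    rw [← hN] at h1
    have h1' : (N : ℝ) ≤ 2 ^ k * ((Finset.univ.filter
        (fun b : Fin n × Fin n → Bool => ∀ i, orient b (v i) (v (cyc i)))).card : ℝ) := by
      exact_mod_cast h1
    have h2' : ((Finset.univ.filter
        (fun b : Fin n × Fin n → Bool => ∀ i, orient b (v i) (v (cyc i)))).card : ℝ)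
        + ((bad v).card : ℝ) = N := by
      exact_mod_cast h2
    have h3 : (N : ℝ) / 2 ^ k ≤ ((Finset.univ.filter
        (fun b : Fin n × Fin n → Bool => ∀ i, orient b (v i) (v (cyc i)))).card : ℝ) := by
      rw [div_le_iff₀ (by positivity)]
      linarith
    have h4 : (N : ℝ) * (1 - 1 / 2 ^ k) = N - N / 2 ^ k := by ring
    linarith
  let U : Finset (Fin t → (Fin n × Fin n → Bool)) :=
    (Finset.univ.filter (fun v : Fin k → Fin n => Function.Injective v)).biUnion
      (fun v => Fintype.piFinset (fun _ : Fin t => bad v))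
  have hbase : (0 : ℝ) ≤ 1 - 1 / 2 ^ k := by
    have : (1 : ℝ) / 2 ^ k ≤ 1 := by
      rw [div_le_one (by positivity)]
      exact one_le_pow₀ (by norm_num)
    linarith
  have hU : (U.card : ℝ) < (N : ℝ) ^ t := by
    have h1 : (U.card : ℝ) ≤ ∑ v ∈ Finset.univ.filter
        (fun v : Fin k → Fin n => Function.Injective v), ((bad v).card : ℝ) ^ t := by
      have := Finset.card_biUnion_le
        (s := Finset.univ.filter (fun v : Fin k → Fin n => Function.Injective v))
        (t := fun v => Fintype.piFinset (fun _ : Fin t => bad v))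
      simp only [Fintype.card_piFinset_const] at this
      exact_mod_cast this
    have h2 : ∑ v ∈ Finset.univ.filter
        (fun v : Fin k → Fin n => Function.Injective v), ((bad v).card : ℝ) ^ t ≤
        ∑ v ∈ Finset.univ.filter
        (fun v : Fin k → Fin n => Function.Injective v), ((N : ℝ) * (1 - 1 / 2 ^ k)) ^ t := by
      refine Finset.sum_le_sum fun v hv => ?_
      exact pow_le_pow_left₀ (by positivity) (hbad v (Finset.mem_filter.1 hv).2) t
    have h3 : ((Finset.univ.filter
        (fun v : Fin k → Fin n => Function.Injective v)).card : ℝ) ≤ (n : ℝ) ^ k := by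
      have := Finset.card_le_univ
        (Finset.univ.filter (fun v : Fin k → Fin n => Function.Injective v))
      simp only [Fintype.card_pi, Fintype.card_fin, Finset.prod_const, Finset.card_univ] at this
      exact_mod_cast this
    rw [Finset.sum_const, nsmul_eq_mul] at h2
    have h4 : (0 : ℝ) ≤ ((N : ℝ) * (1 - 1 / 2 ^ k)) ^ t := by positivity
    have h5 := mul_le_mul_of_nonneg_right h3 h4
    have h6 : (n : ℝ) ^ k * ((N : ℝ) * (1 - 1 / 2 ^ k)) ^ t
        = (N : ℝ) ^ t * ((n : ℝ) ^ k * (1 - 1 / 2 ^ k) ^ t) := by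
      rw [mul_pow]; ring
    have h7 : (N : ℝ) ^ t * ((n : ℝ) ^ k * (1 - 1 / 2 ^ k) ^ t) < (N : ℝ) ^ t * 1 :=
      mul_lt_mul_of_pos_left ht (by positivity)
    linarith
  have hex : ∃ f, f ∉ U := by
    by_contra hcon
    push Not at hcon
    have : U = Finset.univ := Finset.eq_univ_iff_forall.2 hcon
    rw [this, Finset.card_univ, Fintype.card_fun, ← hN, Fintype.card_fin] at hU
    push_cast at hU
    exact lt_irrefl _ hU
  obtain ⟨f, hf⟩ := hex
  refine ⟨fun s => orient (f s), fun s => orient_isTournament _, fun v hv => ?_⟩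
  by_contra hcon
  push Not at hcon
  apply hf
  simp only [U, Finset.mem_biUnion, Finset.mem_filter, Finset.mem_univ, true_and,
    Fintype.mem_piFinset, bad]
  refine ⟨v, hv, fun s => ?_⟩
  obtain ⟨i, hi⟩ := (hcon s).1
  exact fun h => hi (h i)

lemma exists_covering_size {n k : ℕ} (hk : 3 ≤ k) (hn : 2 ≤ n) :
    ∃ t : ℕ, (∃ F : Fin t → (Fin n → Fin n → Prop), CycleCovering n k t F) ∧
      (t : ℝ) ≤ 2 * k * 2 ^ k * Real.logb 2 n := by
  have hn' : (2 : ℝ) ≤ n := by exact_mod_cast hn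
  have hk' : (3 : ℝ) ≤ k := by exact_mod_cast hk
  have hlogpos : 0 ≤ Real.log n := Real.log_nonneg (by linarith)
  have hle : Real.log n ≤ Real.logb 2 n := by
    rw [Real.logb, le_div_iff₀ (Real.log_pos (by norm_num))]
    have : Real.log 2 ≤ 1 := by linarith [Real.log_two_lt_d9]
    nlinarith
  have hone : 1 ≤ Real.logb 2 n := by
    rw [Real.le_logb_iff_rpow_le (by norm_num) (by linarith)]
    simpa using hn'
  have h2k : (1 : ℝ) ≤ 2 ^ k := one_le_pow₀ (by norm_num)
  refine ⟨⌊k * 2 ^ k * Real.log n⌋₊ + 1, exists_covering hk ?_, ?_⟩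
  · set t := ⌊(k : ℝ) * 2 ^ k * Real.log n⌋₊ + 1 with ht
    have htgt : (k : ℝ) * 2 ^ k * Real.log n < t := by
      rw [ht]; push_cast; exact Nat.lt_floor_add_one _
    have h0 : (0 : ℝ) ≤ 1 - 1 / 2 ^ k := by
      have : (1 : ℝ) / 2 ^ k ≤ 1 := by
        rw [div_le_one (by positivity)]; exact h2k
      linarith
    have h1 : (1 - 1 / 2 ^ k : ℝ) ^ t ≤ Real.exp (-(1 / 2 ^ k) * t) := by
      have := pow_le_pow_left₀ h0 (Real.one_sub_le_exp_neg (1 / 2 ^ k)) t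
      rwa [← Real.exp_nat_mul, mul_comm] at this
    have h2 : (n : ℝ) ^ k = Real.exp (k * Real.log n) := by
      rw [Real.exp_nat_mul, Real.exp_log (by linarith)]
    calc (n : ℝ) ^ k * (1 - 1 / 2 ^ k) ^ t
        ≤ Real.exp (k * Real.log n) * Real.exp (-(1 / 2 ^ k) * t) := by
          rw [h2]; exact mul_le_mul_of_nonneg_left h1 (Real.exp_pos _).le
      _ = Real.exp (k * Real.log n - t / 2 ^ k) := by rw [← Real.exp_add]; congr 1; ring
      _ < 1 := by
          rw [Real.exp_lt_one_iff, sub_neg, lt_div_iff₀ (by positivity)]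
          linarith
  · push_cast
    have hfl : (⌊(k : ℝ) * 2 ^ k * Real.log n⌋₊ : ℝ) ≤ k * 2 ^ k * Real.log n :=
      Nat.floor_le (by positivity)
    have h1 : (k : ℝ) * 2 ^ k * Real.log n ≤ k * 2 ^ k * Real.logb 2 n :=
      mul_le_mul_of_nonneg_left hle (by positivity)
    have h2 : (1 : ℝ) ≤ k * 2 ^ k := by nlinarith
    have h3 : (1 : ℝ) ≤ k * 2 ^ k * Real.logb 2 n := by nlinarith
    linarith

/-! ### Lower bound -/

/-- The permutation of the numbers `≥ 3` exchanging `3 + 2j` and `4 + 2j` whenever `e j` is set. -/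
def flipPair (e : ℕ → Bool) (i : ℕ) : ℕ :=
  if e ((i - 3) / 2) then (if i % 2 = 1 then i + 1 else i - 1) else i

lemma flipPair_odd (e : ℕ → Bool) (j : ℕ) :
    flipPair e (3 + 2 * j) = if e j then 4 + 2 * j else 3 + 2 * j := by
  have h : (3 + 2 * j - 3) / 2 = j := by omega
  have h' : (3 + 2 * j) % 2 = 1 := by omega
  simp only [flipPair, h, h', if_true]
  split_ifs <;> omega

lemma flipPair_even (e : ℕ → Bool) (j : ℕ) :
    flipPair e (4 + 2 * j) = if e j then 3 + 2 * j else 4 + 2 * j := by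
  have h : (4 + 2 * j - 3) / 2 = j := by omega
  have h' : (4 + 2 * j) % 2 = 0 := by omega
  simp only [flipPair, h, h', zero_ne_one, if_false]
  split_ifs <;> omega

lemma flipPair_flipPair (e : ℕ → Bool) {i : ℕ} (hi : 3 ≤ i) :
    flipPair e (flipPair e i) = i := by
  obtain ⟨j, rfl | rfl⟩ : ∃ j, i = 3 + 2 * j ∨ i = 4 + 2 * j := ⟨(i - 3) / 2, by omega⟩
  · rw [flipPair_odd]
    split_ifs with h
    · rw [flipPair_even, if_pos h]
    · rw [flipPair_odd, if_neg h]
  · rw [flipPair_even]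
    split_ifs with h
    · rw [flipPair_odd, if_pos h]
    · rw [flipPair_even, if_neg h]

/-- Only pairs inside `[3, k)` are exchanged, so this interval is preserved. -/
lemma flipPair_bounds (e : ℕ → Bool) {i k : ℕ} (he : ∀ j, (k - 3) / 2 ≤ j → e j = false)
    (hi : 3 ≤ i) (hik : i < k) : 3 ≤ flipPair e i ∧ flipPair e i < k := by
  unfold flipPair
  by_cases h : e ((i - 3) / 2) = true
  · have : (i - 3) / 2 < (k - 3) / 2 := by
      by_contra hcon
      rw [he _ (by omega)] at h
      exact absurd h (by simp)
    rw [if_pos h]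
    split_ifs <;> omega
  · rw [if_neg h]
    exact ⟨hi, hik⟩

lemma cyc_mk {k i : ℕ} (h : i < k) (h' : i + 1 < k) : cyc (⟨i, h⟩ : Fin k) = ⟨i + 1, h'⟩ := by
  simp [cyc, Nat.mod_eq_of_lt h']

open Classical in
/-- Averaging over the `2^m` direction patterns `ε`: each `s` matches only its own pattern and the
complementary one. -/
lemma exists_pattern {m t : ℕ} (c : Fin t → (Fin m → Bool)) :
    ∃ ε : Fin m → Bool, 2 ^ m *
      (Finset.univ.filter (fun s => c s = ε ∨ c s = fun j => !(ε j))).card ≤ 2 * t := by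
  by_contra! hcon
  have h1 : ∑ ε : Fin m → Bool, (Finset.univ.filter (fun s => c s = ε)).card = t := by
    have := Finset.card_eq_sum_card_fiberwise (s := Finset.univ) (t := Finset.univ) (f := c)
      (fun _ _ => by simp)
    rw [← this]; simp
  have h2 : ∑ ε : Fin m → Bool,
      (Finset.univ.filter (fun s => c s = fun j => !(ε j))).card = t := by
    have := Finset.card_eq_sum_card_fiberwise (s := Finset.univ) (t := Finset.univ)
      (f := fun s j => !(c s j)) (fun _ _ => by simp)
    rw [Finset.card_univ, Fintype.card_fin] at this
    refine Eq.trans ?_ this.symm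
    refine Finset.sum_congr rfl fun ε _ => ?_
    congr 1
    ext s
    simp only [Finset.mem_filter, Finset.mem_univ, true_and]
    constructor
    · rintro h; rw [h]; simp
    · rintro rfl; simp
  have h3 : ∀ ε : Fin m → Bool,
      (Finset.univ.filter (fun s => c s = ε ∨ c s = fun j => !(ε j))).card ≤
      (Finset.univ.filter (fun s => c s = ε)).card +
      (Finset.univ.filter (fun s => c s = fun j => !(ε j))).card := by
    intro ε
    rw [Finset.filter_or]
    exact Finset.card_union_le _ _
  have h4 : ∑ ε : Fin m → Bool,
      (Finset.univ.filter (fun s => c s = ε ∨ c s = fun j => !(ε j))).card ≤ 2 * t := by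
    refine (Finset.sum_le_sum fun ε _ => h3 ε).trans ?_
    rw [Finset.sum_add_distrib, h1, h2, two_mul]
  have h5 : ∑ _ε : Fin m → Bool, 2 * t < ∑ ε : Fin m → Bool, 2 ^ m *
      (Finset.univ.filter (fun s => c s = ε ∨ c s = fun j => !(ε j))).card :=
    Finset.sum_lt_sum_of_nonempty Finset.univ_nonempty fun ε _ => hcon ε
  rw [Finset.sum_const, Finset.card_univ, Fintype.card_fun, Fintype.card_fin,
    Fintype.card_bool, smul_eq_mul, ← Finset.mul_sum] at h5
  have h6 := Nat.lt_of_mul_lt_mul_left h5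
  omega

lemma lower_card {n k t : ℕ} (hk : 3 ≤ k) (hn : k < n) (F : Fin t → (Fin n → Fin n → Prop))
    (hF : CycleCovering n k t F) :
    ∃ r : ℕ, 2 ^ ((k - 3) / 2) * r ≤ 2 * t ∧ n - k ≤ 2 ^ r := by
  classical
  obtain ⟨hT, hcov⟩ := hF
  set m := (k - 3) / 2 with hm
  have hasym : ∀ s i j, i ≠ j → F s i j → ¬ F s j i := by
    intro s i j hij h h'
    rcases hT s i j hij with h1 | h1
    · exact h1.2 h'
    · exact h1.2 h
  let V : ℕ → Fin n := fun i => if h : i < n then ⟨i, h⟩ else ⟨0, by omega⟩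
  have hV : ∀ i (h : i < n), V i = ⟨i, h⟩ := fun i h => dif_pos h
  have hVinj : ∀ i j, i < n → j < n → V i = V j → i = j := by
    intro i j hi hj h
    rw [hV i hi, hV j hj] at h
    exact congrArg Fin.val h
  let c : Fin t → (Fin m → Bool) := fun s j => decide (F s (V (3 + 2 * j)) (V (4 + 2 * j)))
  obtain ⟨ε, hε⟩ := exists_pattern c
  set R := Finset.univ.filter (fun s => c s = ε ∨ c s = fun j => !(ε j)) with hR
  refine ⟨R.card, hε, ?_⟩
  by_contra! hlt
  -- two vertices `≥ k` with the same relation to the vertex `1` in all members of `R`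
  obtain ⟨y, z, hyz, hsame⟩ : ∃ y z : Fin (n - k), y ≠ z ∧
      (fun s : R => decide (F s.1 (V (k + y)) (V 1))) =
        (fun s : R => decide (F s.1 (V (k + z)) (V 1))) := by
    refine Fintype.exists_ne_map_eq_of_card_lt
      (fun (y : Fin (n - k)) (s : R) => decide (F s.1 (V (k + y)) (V 1))) ?_
    simpa using hlt
  have hy := y.isLt
  have hz := z.isLt
  have hyz' : (y : ℕ) ≠ z := fun h => hyz (Fin.ext h)
  let e : ℕ → Bool := fun j => if h : j < m then ε ⟨j, h⟩ else false
  have he : ∀ j, m ≤ j → e j = false := fun j hj => dif_neg (by omega)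
  have he' : ∀ j (h : j < m), e j = ε ⟨j, h⟩ := fun j h => dif_pos h
  let w : ℕ → ℕ := fun i =>
    if i = 0 then k + y else if i = 1 then 1 else if i = 2 then k + z else flipPair e i
  have w0 : w 0 = k + y := rfl
  have w1 : w 1 = 1 := rfl
  have w2 : w 2 = k + z := rfl
  have w3 : ∀ i, 3 ≤ i → w i = flipPair e i := by
    intro i hi
    simp only [w]
    rw [if_neg (by omega), if_neg (by omega), if_neg (by omega)]
  have hb : ∀ i, 3 ≤ i → i < k → 3 ≤ w i ∧ w i < k := by
    intro i hi hik
    rw [w3 i hi]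
    exact flipPair_bounds e he hi hik
  have hwn : ∀ i, i < k → w i < n := by
    intro i hi
    rcases (by omega : i = 0 ∨ i = 1 ∨ i = 2 ∨ 3 ≤ i) with rfl | rfl | rfl | h
    · omega
    · omega
    · omega
    · have := hb i h hi; omega
  have hwinj : ∀ i j, i < k → j < k → w i = w j → i = j := by
    intro i j hi hj h
    have Hi := hb i
    have Hj := hb j
    rcases (by omega : i = 0 ∨ i = 1 ∨ i = 2 ∨ 3 ≤ i) with rfl | rfl | rfl | h1 <;>
    rcases (by omega : j = 0 ∨ j = 1 ∨ j = 2 ∨ 3 ≤ j) with rfl | rfl | rfl | h2 <;>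
    first
    | omega
    | (rw [w3 i h1, w3 j h2] at h
       rw [← flipPair_flipPair e h1, h, flipPair_flipPair e h2])
  have hvinj : Function.Injective (fun i : Fin k => V (w i)) := by
    intro i j h
    exact Fin.ext (hwinj _ _ i.isLt j.isLt (hVinj _ _ (hwn _ i.isLt) (hwn _ j.isLt) h))
  obtain ⟨s, hs⟩ := hcov _ hvinj
  have hpair : ∀ j : Fin m, 4 + 2 * (j : ℕ) < k := by
    intro j
    have := j.isLt
    omega
  have hneV : ∀ j : Fin m, V (3 + 2 * j) ≠ V (4 + 2 * j) := by
    intro j h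
    have := hpair j
    have := hVinj _ _ (by omega) (by omega) h
    omega
  have hya : V (k + y) ≠ V 1 := by
    intro h
    have := hVinj _ _ (by omega) (by omega) h
    omega
  have hza : V (k + z) ≠ V 1 := by
    intro h
    have := hVinj _ _ (by omega) (by omega) h
    omega
  have hsR : ∀ s, s ∈ R → (F s (V (k + y)) (V 1) ↔ F s (V (k + z)) (V 1)) := by
    intro s hs
    have := congrFun hsame ⟨s, hs⟩
    simpa using this
  rcases hs with hs | hs
  · have hmem : s ∈ R := by
      rw [hR, Finset.mem_filter]
      refine ⟨Finset.mem_univ _, Or.inr ?_⟩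
      funext j
      have hj := hpair j
      have h := hs ⟨3 + 2 * j, by omega⟩
      rw [cyc_mk (by omega) (by omega : 3 + 2 * (j : ℕ) + 1 < k)] at h
      simp only [show 3 + 2 * (j : ℕ) + 1 = 4 + 2 * j by omega] at h
      rw [w3 _ (by omega), w3 _ (by omega), flipPair_odd, flipPair_even, he' j j.isLt] at h
      simp only [Fin.eta] at h
      cases hc : ε j
      · simpa [c, hc] using h
      · simp only [hc, if_true] at h
        simpa [c] using hasym _ _ _ (hneV j).symm h
    have h0 := hs ⟨0, by omega⟩
    have h1 := hs ⟨1, by omega⟩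
    rw [cyc_mk (by omega) (by omega : 0 + 1 < k)] at h0
    rw [cyc_mk (by omega) (by omega : 1 + 1 < k)] at h1
    exact hasym s _ _ hza ((hsR s hmem).1 h0) h1
  · have hmem : s ∈ R := by
      rw [hR, Finset.mem_filter]
      refine ⟨Finset.mem_univ _, Or.inl ?_⟩
      funext j
      have hj := hpair j
      have h := hs ⟨3 + 2 * j, by omega⟩
      rw [cyc_mk (by omega) (by omega : 3 + 2 * (j : ℕ) + 1 < k)] at h
      simp only [show 3 + 2 * (j : ℕ) + 1 = 4 + 2 * j by omega] at h
      rw [w3 _ (by omega), w3 _ (by omega), flipPair_odd, flipPair_even, he' j j.isLt] at h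
      simp only [Fin.eta] at h
      cases hc : ε j
      · simp only [hc, Bool.false_eq_true, if_false] at h
        simpa [c] using hasym _ _ _ (hneV j).symm h
      · simpa [c, hc] using h
    have h0 := hs ⟨0, by omega⟩
    have h1 := hs ⟨1, by omega⟩
    rw [cyc_mk (by omega) (by omega : 0 + 1 < k)] at h0
    rw [cyc_mk (by omega) (by omega : 1 + 1 < k)] at h1
    exact hasym s _ _ hya ((hsR s hmem).2 h1) h0

lemma lower_real {n k t : ℕ} (hk : 3 ≤ k) (hn : (k + 2) ^ 2 ≤ n)
    (F : Fin t → (Fin n → Fin n → Prop)) (hF : CycleCovering n k t F) :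
    1 / 16 * (2 : ℝ) ^ ((k : ℝ) / 2) * Real.logb 2 n ≤ t := by
  have hkn : k < n := by nlinarith
  obtain ⟨r, hr, hnr⟩ := lower_card hk hkn F hF
  have hn1 : (1 : ℝ) ≤ n := by exact_mod_cast (by omega : 1 ≤ n)
  have hlog0 : 0 ≤ Real.logb 2 n := Real.logb_nonneg (by norm_num) hn1
  -- `n ≤ (n - k)^2` for `n ≥ (k + 2)^2`, whence `log₂ n ≤ 2 log₂ (n - k) ≤ 2 r`
  have hsq : n ≤ (n - k) ^ 2 := by
    obtain ⟨d, rfl⟩ := Nat.exists_eq_add_of_lt hkn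
    have h1 : k + d + 1 - k = d + 1 := by omega
    rw [h1]
    nlinarith
  have hlog : Real.logb 2 n ≤ 2 * r := by
    have h1 : n ≤ 2 ^ (2 * r) := by
      calc n ≤ (n - k) ^ 2 := hsq
        _ ≤ (2 ^ r) ^ 2 := Nat.pow_le_pow_left hnr 2
        _ = 2 ^ (2 * r) := by rw [← pow_mul, mul_comm]
    rw [Real.logb_le_iff_le_rpow (by norm_num) (by linarith)]
    have h2 : ((2 : ℝ) ^ ((2 : ℝ) * r)) = ((2 ^ (2 * r) : ℕ) : ℝ) := by
      push_cast
      rw [← Real.rpow_natCast]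
      push_cast
      rfl
    rw [h2]
    exact_mod_cast h1
  have hpow : (2 : ℝ) ^ ((k : ℝ) / 2) ≤ 4 * 2 ^ ((k - 3) / 2) := by
    have h1 : (k : ℝ) / 2 ≤ (((k - 3) / 2 + 2 : ℕ) : ℝ) := by
      have : k ≤ 2 * ((k - 3) / 2 + 2) := by omega
      have : (k : ℝ) ≤ 2 * (((k - 3) / 2 + 2 : ℕ) : ℝ) := by exact_mod_cast this
      linarith
    calc (2 : ℝ) ^ ((k : ℝ) / 2) ≤ (2 : ℝ) ^ (((k - 3) / 2 + 2 : ℕ) : ℝ) :=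
          Real.rpow_le_rpow_of_exponent_le (by norm_num) h1
      _ = 4 * 2 ^ ((k - 3) / 2) := by rw [Real.rpow_natCast, pow_add]; ring
  have hr' : (2 : ℝ) ^ ((k - 3) / 2) * r ≤ 2 * t := by exact_mod_cast hr
  have h := mul_le_mul hpow hlog hlog0 (by positivity)
  nlinarith

/-- There are absolute constants `s₁, s₂ > 0` such that for every fixed `k ≥ 3` and all
sufficiently large `n`, `s₁ · 2^(k/2) · log₂ n ≤ W(n,k) ≤ s₂ · k · 2^k · log₂ n`. -/
theorem Wnk_bounds :
    ∃ s₁ s₂ : ℝ, 0 < s₁ ∧ 0 < s₂ ∧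
      ∀ k : ℕ, 3 ≤ k → ∃ N : ℕ, ∀ n : ℕ, N ≤ n →
        s₁ * (2 : ℝ) ^ ((k : ℝ) / 2) * Real.logb 2 n ≤ (Wnk n k : ℝ) ∧
          (Wnk n k : ℝ) ≤ s₂ * (k : ℝ) * (2 : ℝ) ^ (k : ℕ) * Real.logb 2 n := by
  refine ⟨1 / 16, 2, by norm_num, by norm_num, fun k hk => ⟨(k + 2) ^ 2, fun n hn => ?_⟩⟩
  obtain ⟨t, ht, htle⟩ := exists_covering_size (n := n) hk (by nlinarith)
  constructor
  · obtain ⟨F, hF⟩ := Nat.sInf_mem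
      (s := {t : ℕ | ∃ F : Fin t → (Fin n → Fin n → Prop), CycleCovering n k t F}) ⟨t, ht⟩
    exact lower_real hk hn F hF
  · have : Wnk n k ≤ t := Nat.sInf_le ht
    exact le_trans (by exact_mod_cast this) htle
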